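/- arXiv:1911.03994 — 5 statements merged into one kernel-verified Lean document; each statement's English description precedes it below -/
import Mathlib

section
/- Let C = (BΓᵀB + Γ + σ²I)⁻¹ and D = C·B (the widely linear equalizer coefficients), and suppose the matrix Γ + BΓᵀB + σ²I is invertible. Then for every vector y ∈ ℂⁿ, the real-only equalizer output equals 2A times the widely linear equalizer output: (2A(Γ + BΓᵀB)A† + (σ²/2)I)⁻¹ · (A(y + Bȳ)) = 2A·(Cy + Dȳ). -/
open Matrix

noncomputable def Amat (ν : ℕ) : Matrix (Fin (2*ν)) (Fin (2*ν)) ℂ :=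
  Matrix.diagonal (fun i => if Even (i : ℕ) then (1/2 : ℂ) else -Complex.I/2)

noncomputable def Bmat (ν : ℕ) : Matrix (Fin (2*ν)) (Fin (2*ν)) ℂ :=
  Matrix.diagonal (fun i => (-1 : ℂ) ^ (i : ℕ))

/-- The diagonal matrix `Amat ν` is one half of a unitary matrix. -/
theorem Amat_conjTranspose_mul_self (ν : ℕ) : (Amat ν)ᴴ * Amat ν = (1/4 : ℂ) • 1 := by
  rw [Amat, diagonal_conjTranspose, diagonal_mul_diagonal, smul_one_eq_diagonal]
  congr 1
  funext i
  by_cases h : Even (i : ℕ)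
  · simp only [Pi.star_apply, h, if_true]
    norm_num
  · simp only [Pi.star_apply, h, if_false, RCLike.star_def, map_div₀, map_neg, Complex.conj_I,
      map_ofNat]
    linear_combination (-1/4 : ℂ) * Complex.I_mul_I

theorem Amat_mul_conjTranspose_self (ν : ℕ) : Amat ν * (Amat ν)ᴴ = (1/4 : ℂ) • 1 := by
  rw [← Amat_conjTranspose_mul_self, Amat, diagonal_conjTranspose, diagonal_mul_diagonal,
    diagonal_mul_diagonal]
  simp only [mul_comm]

/-- ROE output equals 2A times the WLE output. -/
theorem roe_eq_twoA_wle (ν : ℕ) (hν : 1 ≤ ν) (σ2 : ℝ) (hσ : 0 < σ2)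
    (Γ : Matrix (Fin (2*ν)) (Fin (2*ν)) ℂ)
    (A B C D : Matrix (Fin (2*ν)) (Fin (2*ν)) ℂ)
    (hA : A = Amat ν) (hB : B = Bmat ν)
    (hC : C = (B * Γᵀ * B + Γ + (σ2 : ℂ) • 1)⁻¹)
    (hD : D = C * B)
    (hinv : IsUnit (Γ + B * Γᵀ * B + (σ2 : ℂ) • 1))
    (y : Fin (2*ν) → ℂ) :
    ((2:ℂ) • (A * (Γ + B * Γᵀ * B) * Aᴴ) + ((σ2 : ℂ)/2) • 1)⁻¹ *ᵥ
      (A *ᵥ (y + B *ᵥ star y)) =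
    (2:ℂ) • (A *ᵥ (C *ᵥ y + D *ᵥ star y)) := by
  have hl : Aᴴ * A = (1/4 : ℂ) • 1 := hA ▸ Amat_conjTranspose_mul_self ν
  have hr : A * Aᴴ = (1/4 : ℂ) • 1 := hA ▸ Amat_mul_conjTranspose_self ν
  rw [add_comm (B * Γᵀ * B) Γ] at hC
  generalize Γ + B * Γᵀ * B = S at hC hinv ⊢
  have hMC : (S + (σ2 : ℂ) • 1) * C = 1 := by
    rw [hC]
    exact mul_nonsing_inv _ ((isUnit_iff_isUnit_det _).mp hinv)
  have hN : (2:ℂ) • (A * S * Aᴴ) + ((σ2 : ℂ)/2) • 1 =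
      (2:ℂ) • (A * (S + (σ2 : ℂ) • 1) * Aᴴ) := by
    simp only [mul_add, add_mul, mul_smul_comm, smul_mul_assoc, mul_one, hr, smul_add, smul_smul]
    ring_nf
  have hNinv : ((2:ℂ) • (A * S * Aᴴ) + ((σ2 : ℂ)/2) • 1)⁻¹ = (8:ℂ) • (A * C * Aᴴ) := by
    apply inv_eq_right_inv
    have hprod : A * (S + (σ2 : ℂ) • 1) * Aᴴ * (A * C * Aᴴ) =
        A * (S + (σ2 : ℂ) • 1) * (Aᴴ * A) * C * Aᴴ := by
      simp only [Matrix.mul_assoc]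
    rw [hN, smul_mul_smul_comm, hprod, hl, mul_smul_comm, mul_one, smul_mul_assoc,
      Matrix.mul_assoc A, hMC, mul_one, smul_mul_assoc, hr, smul_smul, smul_smul]
    norm_num
  rw [hNinv, hD, ← mulVec_mulVec, ← mulVec_add, mulVec_mulVec, smul_mul_assoc,
    Matrix.mul_assoc (A * C), hl, mul_smul_comm, mul_one, smul_smul, smul_mulVec, mulVec_mulVec]
  norm_num
end

section
/- If Γ is an n×n Hermitian complex matrix, then every entry of the matrix Γ_a = 2A(Γ + BΓᵀB)A† is real, i.e., Γ_a equals its entrywise complex conjugate. -/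
open Matrix

theorem gamma_a_real (ν : ℕ) (hν : 1 ≤ ν)
    (A B : Matrix (Fin (2*ν)) (Fin (2*ν)) ℂ)
    (hA : A = Amat ν) (hB : B = Bmat ν)
    (Γ : Matrix (Fin (2*ν)) (Fin (2*ν)) ℂ) (hΓ : Γ.IsHermitian) :
    ((2:ℂ) • (A * (Γ + B * Γᵀ * B) * Aᴴ)).map (starRingEnd ℂ) =
    (2:ℂ) • (A * (Γ + B * Γᵀ * B) * Aᴴ) := by
  subst hA hB
  ext i j
  have hconj : (starRingEnd ℂ) (Γ i j) = Γ j i := hΓ.apply j i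
  have hconj' : (starRingEnd ℂ) (Γ j i) = Γ i j := hΓ.apply i j
  have hconj_two : (starRingEnd ℂ) 2 = 2 := Complex.conj_ofNat 2
  simp only [Amat, Bmat, diagonal_conjTranspose, Matrix.map_apply, Matrix.smul_apply,
    mul_diagonal, diagonal_mul, Matrix.add_apply, transpose_apply, smul_eq_mul, Pi.star_apply]
  rcases Nat.even_or_odd (i : ℕ) with hi | hi <;> rcases Nat.even_or_odd (j : ℕ) with hj | hj <;>
    simp [hi, hj, Nat.not_even_iff_odd.mpr, hconj, hconj', hconj_two] <;>
    ring
end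

section
/- Let Γ be an n×n Hermitian positive definite complex matrix and σ² > 0. Set T = 2AΓA† + (σ²/2)I and N = 2(AB)Γᵀ(AB)†. Then the average MMSE of the real-only equalizer decomposes exactly as that of the linear equalizer minus a nonnegative correction: (σ²/(4ν))·tr((2A(Γ + BΓᵀB)A† + (σ²/2)I)⁻¹) = (σ²/(2ν))·tr((Γ + σ²I)⁻¹) − (σ²/(4ν))·tr(T⁻¹(N⁻¹ + T⁻¹)⁻¹T⁻¹). -/
open Matrix ComplexOrder

lemma Amat_mul_conjTranspose (ν : ℕ) : Amat ν * (Amat ν)ᴴ = (1 / 4 : ℂ) • 1 := by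
  rw [Amat, diagonal_conjTranspose, diagonal_mul_diagonal, ← diagonal_one, ← diagonal_smul]
  congr 1
  ext i
  simp only [Pi.star_apply, Pi.smul_apply, smul_eq_mul, mul_one]
  split_ifs
  · norm_num
  · simp [div_mul_div_comm]
    norm_num

lemma isUnit_Amat (ν : ℕ) : IsUnit (Amat ν) := by
  refine IsUnit.of_mul_eq_one ((4 : ℂ) • (Amat ν)ᴴ) ?_
  rw [Matrix.mul_smul, Amat_mul_conjTranspose, smul_smul]
  norm_num

lemma Bmat_conjTranspose (ν : ℕ) : (Bmat ν)ᴴ = Bmat ν := by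
  rw [Bmat, diagonal_conjTranspose]
  congr 1
  ext i
  simp

lemma Bmat_mul_self (ν : ℕ) : Bmat ν * Bmat ν = 1 := by
  rw [Bmat, diagonal_mul_diagonal, ← diagonal_one]
  congr 1
  ext i
  rw [← mul_pow]
  norm_num

lemma isUnit_Bmat (ν : ℕ) : IsUnit (Bmat ν) :=
  IsUnit.of_mul_eq_one _ (Bmat_mul_self ν)

/-- The inverse of a sum of two positive definite matrices, as a correction of the inverse of the
first. -/
lemma Matrix.PosDef.inv_add_eq_sub {n : Type*} [Fintype n] [DecidableEq n] {T N : Matrix n n ℂ}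
    (hT : T.PosDef) (hN : N.PosDef) :
    (T + N)⁻¹ = T⁻¹ - T⁻¹ * (N⁻¹ + T⁻¹)⁻¹ * T⁻¹ := by
  have h := Matrix.add_mul_mul_inv_eq_sub T 1 N 1 hT.isUnit hN.isUnit
    (by simpa using (hN.inv.add hT.inv).isUnit)
  simpa using h

/-- If `U * V = c • 1`, then multiplying by `U` and `V` on the two sides scales the trace of the
inverse by `c⁻¹`. -/
lemma Matrix.trace_inv_mul_mul {n : Type*} [Fintype n] [DecidableEq n] {U V : Matrix n n ℂ}
    {c : ℂ} (hc : c ≠ 0) (hUV : U * V = c • 1) (M : Matrix n n ℂ) :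
    ((U * M * V)⁻¹).trace = c⁻¹ * (M⁻¹).trace := by
  have hUV' : U * (c⁻¹ • V) = 1 := by
    rw [Matrix.mul_smul, hUV, smul_smul, inv_mul_cancel₀ hc, one_smul]
  have hinv : (V * U)⁻¹ = c⁻¹ • 1 := inv_eq_right_inv <| by
    rw [Matrix.mul_smul, Matrix.mul_one, ← Matrix.smul_mul, mul_eq_one_comm.1 hUV']
  rw [mul_inv_rev, mul_inv_rev, ← Matrix.mul_assoc, trace_mul_comm, ← Matrix.mul_assoc,
    ← mul_inv_rev, hinv, Matrix.smul_mul, Matrix.one_mul, trace_smul, smul_eq_mul]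

theorem mmse_decomposition (ν : ℕ) (hν : 1 ≤ ν) (σ2 : ℝ) (hσ : 0 < σ2)
    (A B : Matrix (Fin (2*ν)) (Fin (2*ν)) ℂ)
    (hA : A = Amat ν) (hB : B = Bmat ν)
    (Γ : Matrix (Fin (2*ν)) (Fin (2*ν)) ℂ) (hΓ : Γ.PosDef)
    (T N : Matrix (Fin (2*ν)) (Fin (2*ν)) ℂ)
    (hT : T = (2:ℂ) • (A * Γ * Aᴴ) + ((σ2 : ℂ)/2) • 1)
    (hN : N = (2:ℂ) • ((A * B) * Γᵀ * (A * B)ᴴ)) :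
    ((σ2 : ℂ)/(4*ν)) * (((2:ℂ) • (A * (Γ + B * Γᵀ * B) * Aᴴ) + ((σ2 : ℂ)/2) • 1)⁻¹).trace =
    ((σ2 : ℂ)/(2*ν)) * ((Γ + (σ2 : ℂ) • 1)⁻¹).trace -
    ((σ2 : ℂ)/(4*ν)) * (T⁻¹ * (N⁻¹ + T⁻¹)⁻¹ * T⁻¹).trace := by
  have hAA : A * Aᴴ = (1 / 4 : ℂ) • 1 := hA ▸ Amat_mul_conjTranspose ν
  have hAu : IsUnit A := hA ▸ isUnit_Amat ν
  have hBH : Bᴴ = B := hB ▸ Bmat_conjTranspose ν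
  have hBu : IsUnit B := hB ▸ isUnit_Bmat ν
  have hσ' : (0 : ℂ) < σ2 := by exact_mod_cast hσ
  have hT' : T = (2 : ℂ) • (A * (Γ + (σ2 : ℂ) • 1) * Aᴴ) := by
    rw [hT, Matrix.mul_add, Matrix.add_mul, Matrix.mul_smul, Matrix.smul_mul, Matrix.mul_one, hAA,
      smul_add, smul_smul, smul_smul]
    congr 2
    ring
  have hTpos : T.PosDef := by
    rw [hT']
    exact (((hAu.posDef_star_right_conjugate_iff).2
      (hΓ.add (PosDef.one.smul hσ')))).smul two_pos
  have hNpos : N.PosDef := by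
    rw [hN]
    exact (((hAu.mul hBu).posDef_star_right_conjugate_iff).2 hΓ.transpose).smul two_pos
  have hsum : (2:ℂ) • (A * (Γ + B * Γᵀ * B) * Aᴴ) + ((σ2 : ℂ)/2) • 1 = T + N := by
    rw [hT, hN, conjTranspose_mul, hBH]
    simp only [Matrix.mul_add, Matrix.add_mul, smul_add, Matrix.mul_assoc]
    abel
  have htrace : (T⁻¹).trace = 2 * ((Γ + (σ2 : ℂ) • 1)⁻¹).trace := by
    have hAA' : A * ((2 : ℂ) • Aᴴ) = (1 / 2 : ℂ) • 1 := by
      rw [Matrix.mul_smul, hAA, smul_smul]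
      norm_num
    rw [hT', ← Matrix.mul_smul, trace_inv_mul_mul (by norm_num) hAA']
    norm_num
  rw [hsum, hTpos.inv_add_eq_sub hNpos, trace_sub, htrace]
  ring
end

section
/- Let H be an m×n complex matrix, set Ĥ = 2HA†, Ĥ_R = (Ĥ + Ĥ*)/2 and Ĥ_I = (Ĥ − Ĥ*)/(2j). Then the real matched-filter autocorrelation equals the real-valued channel autocorrelation matrix: Ĥ_Rᵀ·Ĥ_R + Ĥ_Iᵀ·Ĥ_I = 2A(H†H + B(H†H)ᵀB)A†. -/
open Matrix

/-- Multiplying the diagonal of `A` by the alternating signs of `B` conjugates it. -/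
lemma Amat_mul_Bmat (ν : ℕ) : Amat ν * Bmat ν = (Amat ν)ᴴ := by
  rw [Amat, Bmat, diagonal_mul_diagonal, diagonal_conjTranspose]
  congr 1
  funext i
  rcases Nat.even_or_odd (i : ℕ) with h | h
  · simp [h]
  · simp [Nat.not_even_iff_odd.mpr h, h.neg_one_pow, neg_div]

lemma Bmat_mul_conjTranspose_Amat (ν : ℕ) : Bmat ν * (Amat ν)ᴴ = Amat ν := by
  have hB : (Bmat ν)ᴴ = Bmat ν := by
    rw [Bmat, diagonal_conjTranspose]
    congr 1
    funext i
    simp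
  simpa [hB] using congrArg conjTranspose (Amat_mul_Bmat ν)

lemma transpose_Amat (ν : ℕ) : (Amat ν)ᵀ = Amat ν :=
  diagonal_transpose _

/-- The Gram matrices of the real and imaginary parts of `M` add up to the real part of the
Gram matrix of `M`. -/
lemma transpose_mul_self_re_add_im {m n : Type*} [Fintype m] (M : Matrix m n ℂ) :
    ((2 : ℂ)⁻¹ • (M + M.map (starRingEnd ℂ)))ᵀ * ((2 : ℂ)⁻¹ • (M + M.map (starRingEnd ℂ))) +
      ((2 * Complex.I : ℂ)⁻¹ • (M - M.map (starRingEnd ℂ)))ᵀ *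
        ((2 * Complex.I : ℂ)⁻¹ • (M - M.map (starRingEnd ℂ))) =
    (2 : ℂ)⁻¹ • (Mᴴ * M + (Mᴴ * M)ᵀ) := by
  ext i k
  simp only [Matrix.add_apply, Matrix.smul_apply, Matrix.sub_apply, mul_apply, transpose_apply,
    conjTranspose_apply, map_apply, smul_eq_mul, ← Finset.sum_add_distrib, Finset.mul_sum]
  refine Finset.sum_congr rfl fun l _ => ?_
  simp only [mul_inv, Complex.inv_I, starRingEnd_apply]
  linear_combination (4 : ℂ)⁻¹ * (M l i - star (M l i)) * (M l k - star (M l k)) * Complex.I_sq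

theorem real_matched_filter_autocorrelation (ν m : ℕ) (hν : 1 ≤ ν) (hm : 1 ≤ m)
    (A B : Matrix (Fin (2*ν)) (Fin (2*ν)) ℂ)
    (hA : A = Amat ν) (hB : B = Bmat ν)
    (H : Matrix (Fin m) (Fin (2*ν)) ℂ)
    (Hhat HR HI : Matrix (Fin m) (Fin (2*ν)) ℂ)
    (hHhat : Hhat = (2:ℂ) • (H * Aᴴ))
    (hHR : HR = ((2:ℂ))⁻¹ • (Hhat + Hhat.map (starRingEnd ℂ)))
    (hHI : HI = ((2 * Complex.I : ℂ))⁻¹ • (Hhat - Hhat.map (starRingEnd ℂ))) :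
    HRᵀ * HR + HIᵀ * HI =
    (2:ℂ) • (A * (Hᴴ * H + B * (Hᴴ * H)ᵀ * B) * Aᴴ) := by
  subst hHR hHI hHhat hA hB
  have hgram : ((2 : ℂ) • (H * (Amat ν)ᴴ))ᴴ * ((2 : ℂ) • (H * (Amat ν)ᴴ)) =
      (4 : ℂ) • (Amat ν * (Hᴴ * H) * (Amat ν)ᴴ) := by
    simp only [conjTranspose_smul, conjTranspose_mul, conjTranspose_conjTranspose,
      Matrix.smul_mul, Matrix.mul_smul, smul_smul, Matrix.mul_assoc]
    norm_num
  have hconj : (Amat ν * (Hᴴ * H) * (Amat ν)ᴴ)ᵀ =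
      Amat ν * (Bmat ν * (Hᴴ * H)ᵀ * Bmat ν) * (Amat ν)ᴴ := by
    have hAt : ((Amat ν)ᴴ)ᵀ = (Amat ν)ᴴ := by
      rw [Amat, diagonal_conjTranspose, diagonal_transpose]
    calc (Amat ν * (Hᴴ * H) * (Amat ν)ᴴ)ᵀ = (Amat ν)ᴴ * (Hᴴ * H)ᵀ * Amat ν := by
          rw [transpose_mul, transpose_mul (Amat ν), hAt, transpose_Amat, Matrix.mul_assoc]
      _ = (Amat ν * Bmat ν) * (Hᴴ * H)ᵀ * (Bmat ν * (Amat ν)ᴴ) := by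
          rw [Amat_mul_Bmat, Bmat_mul_conjTranspose_Amat]
      _ = _ := by simp only [Matrix.mul_assoc]
  rw [transpose_mul_self_re_add_im, hgram, transpose_smul, hconj, ← smul_add, smul_smul,
    Matrix.mul_add, Matrix.add_mul]
  norm_num
end

section
/- Let H be an m×n complex matrix, set Ĥ = 2HA†, Ĥ_R = (Ĥ + Ĥ*)/2 and Ĥ_I = (Ĥ − Ĥ*)/(2j). Let a ∈ ℂⁿ have real entries (ā = a), let z ∈ ℂᵐ, and set r = Ĥa + z, Γ = H†H, x = 2A†a, and y = Γx + H†z. Then the pre-processed real input to the equalizer coincides with the post-processed matched-filter output: Ĥ_Rᵀ·((r + r̄)/2) + Ĥ_Iᵀ·((r − r̄)/(2j)) = A(y + Bȳ). -/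
open Matrix

/-- Combining real and imaginary parts: `Re(M)ᵀ Re(r) + Im(M)ᵀ Im(r) = Re(Mᴴ r)`. -/
theorem re_transpose_mulVec_re_add_im_transpose_mulVec_im {ι κ : Type*} [Fintype ι]
    (M : Matrix ι κ ℂ) (r : ι → ℂ) :
    ((2 : ℂ)⁻¹ • (M + M.map (starRingEnd ℂ)))ᵀ *ᵥ ((2 : ℂ)⁻¹ • (r + star r)) +
        ((2 * Complex.I : ℂ)⁻¹ • (M - M.map (starRingEnd ℂ)))ᵀ *ᵥ
          ((2 * Complex.I : ℂ)⁻¹ • (r - star r)) =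
      (2 : ℂ)⁻¹ • (Mᴴ *ᵥ r + star (Mᴴ *ᵥ r)) := by
  ext k
  simp only [Pi.add_apply, Pi.smul_apply, Pi.sub_apply, Pi.star_apply, mulVec, dotProduct,
    transpose_apply, conjTranspose_apply, Matrix.smul_apply, Matrix.add_apply, Matrix.sub_apply,
    map_apply, smul_eq_mul, star_sum, star_mul', star_star, starRingEnd_apply,
    ← Finset.sum_add_distrib, Finset.mul_sum]
  refine Finset.sum_congr rfl fun i _ => ?_
  have hI : (2 * Complex.I : ℂ)⁻¹ * (2 * Complex.I : ℂ)⁻¹ = -(1 / 4) := by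
    rw [← mul_inv, mul_mul_mul_comm, Complex.I_mul_I]
    norm_num
  linear_combination (M i k - star (M i k)) * (r i - star (r i)) * hI

theorem Amat_mulVec_Bmat_mulVec_star (ν : ℕ) (y : Fin (2 * ν) → ℂ) :
    Amat ν *ᵥ (Bmat ν *ᵥ star y) = star (Amat ν *ᵥ y) := by
  ext i
  simp only [Amat, Bmat, mulVec_diagonal, Pi.star_apply, star_mul']
  rcases Nat.even_or_odd (i : ℕ) with h | h
  · simp [h, h.neg_one_pow]
  · simp [Nat.not_even_iff_odd.mpr h, h.neg_one_pow, neg_div]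

theorem preprocessing_eq_postprocessing (ν m : ℕ) (hν : 1 ≤ ν) (hm : 1 ≤ m)
    (A B : Matrix (Fin (2*ν)) (Fin (2*ν)) ℂ)
    (hA : A = Amat ν) (hB : B = Bmat ν)
    (H : Matrix (Fin m) (Fin (2*ν)) ℂ)
    (Hhat HR HI : Matrix (Fin m) (Fin (2*ν)) ℂ)
    (hHhat : Hhat = (2:ℂ) • (H * Aᴴ))
    (hHR : HR = ((2:ℂ))⁻¹ • (Hhat + Hhat.map (starRingEnd ℂ)))
    (hHI : HI = ((2 * Complex.I : ℂ))⁻¹ • (Hhat - Hhat.map (starRingEnd ℂ)))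
    (a x : Fin (2*ν) → ℂ) (ha : star a = a)
    (z : Fin m → ℂ) (r : Fin m → ℂ)
    (Γ : Matrix (Fin (2*ν)) (Fin (2*ν)) ℂ) (y : Fin (2*ν) → ℂ)
    (hr : r = Hhat *ᵥ a + z)
    (hΓ : Γ = Hᴴ * H)
    (hx : x = (2:ℂ) • (Aᴴ *ᵥ a))
    (hy : y = Γ *ᵥ x + Hᴴ *ᵥ z) :
    HRᵀ *ᵥ (((2:ℂ))⁻¹ • (r + star r)) + HIᵀ *ᵥ (((2 * Complex.I : ℂ))⁻¹ • (r - star r)) =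
    A *ᵥ (y + B *ᵥ star y) := by
  have hHhat_adj : Hhatᴴ = (2 : ℂ) • (A * Hᴴ) := by
    simp [hHhat, conjTranspose_smul]
  have hy_matched : y = Hᴴ *ᵥ r := by
    simp only [hy, hr, hΓ, hx, hHhat, mulVec_add, mulVec_smul, smul_mulVec, mulVec_mulVec,
      Matrix.mul_assoc]
  have hHhat_mulVec : Hhatᴴ *ᵥ r = (2 : ℂ) • (A *ᵥ y) := by
    rw [hHhat_adj, smul_mulVec, hy_matched, mulVec_mulVec]
  rw [hHR, hHI, re_transpose_mulVec_re_add_im_transpose_mulVec_im, hHhat_mulVec, mulVec_add,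
    hA, hB, Amat_mulVec_Bmat_mulVec_star]
  simp [smul_smul]
end
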